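/- There exists a widely digitally delicate prime in base 6; that is, there exists a prime p such that for every natural number i and every digit d ∈ {0, 1, ..., 5} with d ≠ digit_i(p), where digit_i(p) denotes the i-th base-6 digit of p (counting from the least significant digit, i = 0, with digit_i(p) = 0 for all i at or beyond the number of base-6 digits of p, i.e., leading zeros), the number p + (d − digit_i(p))·6^i obtained by replacing the i-th base-6 digit of p (including leading zeros) with d is not prime. -/

import Mathlib

/-- The i-th base-6 digit (from the least significant, starting at i = 0) of n;
for i at or beyond the number of base-6 digits of n this is 0 (a leading zero). -/
def digit (n i : ℕ) : ℕ := n / 6 ^ i % 6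

def wQ : ℕ := 3653561404637036493314304455139618035295761442810120664997660827871945245534297333218456939948382352393604091427704602053021299013883864241764815391929757830099302026999324518107617508738746297414229157212615

def wM : ℕ := 1224785599835335939780962058444261987730926057770781075003381398747456658491420956728563543322177239758280023276933029561493867653072656180058153637336373632233275082929504233661083326789452779812649589099258669316903012887906328280366091296130985285392600082120496766575912486430034191186999007810488995612331077267158839623537455615209100740468945675649121955171213193073783003240420114098167730018200534122688793560185932811515650016306620083592922369223899446548073001465737465979318911014018515968370418260656969496228974368358704791373054416202203147408218802123951320297887148311840118848010785724684087533195831348734912344198727861620142300823814642006024748862388270190337431050634851721604633574495178193536634329616842541931776573773062757842716559170116114741359026706419631633646996830541376542771868550399472859118911212652330245980630730896676780120418140677975163978463467189190024249525760212860377246788874164145953104771544351607030977000379228097916898072460101517700663386476687198303597926389836816297455301050617013127810192352266500044748877466456421869642793208879372716877376152171730838893408927060460391872182434128225733999883106247879350893155113280217453216198389182473527001045611335685049569891163689416565110788415855582439487285286063082785270225776757670591368546766612651244903939011785746830253493444827070871921727582334878816633861629409271859912205761949698293707394396799452309251048273376280082619604889936905301583372361257421038610038261851351924309144849983105203714395454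469400019729060908004265575596279218543441146253453680045243051790110832493299906407140889595490087738855620550163193450119119842779796490210250279820161284185946785192992525093671728792372885135074302723445342380958769244304136726164116342601545124242358245404514728419653709451228224482695188511209594864644124305230287445302338759750429435866088997173546533329769183413832814105565263843751887171917418488491965870054123217860476154003135125052604707521339823892861260778473009304858232603013701244637797626425769390964416717978110476405687222728746263150958848823940254651058844352848006835433757308239917110992107407058557552831237487250461258396003423914608865185175368485306126053615745874168521877001192979290153866765742609427846780095978562805521290130313519600114768924849367528959679492346529292088800288085610342203908651183124825275471114697837959589381209431713830263709519920963314860419588988998184758164355706337356384187644275788975316049083838505576582612339826503119938784731539571194942070762473016308300363588930267567162689778701557653946069637097627522435349039545611509791234452360687283735164222729433341836818867784929554765864406322116209846470617120389090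

def wh : ℕ := 49551211874766977513439011818407212023135307878342978937067188639288974576383359281606994463874549106727100449429003713867559460403171703444762932991040346528505754779790891557324852406283150971124893746552894005446


def wp : ℕ := 17081703369781534147969522666902014775386991343231994679894827774048350243941267084420949931314365144446308337271330162157977345601133017617811558417196148769324014841390243204514414829208711579143367594380549568992066495971417287825372883260059445616690035187204939457639500943253159134166311796078332310538248934645227833890505944607156171695004145187611661565128611942842585123363288860244761012662092671899445038626201514541057

def force {α : Type} (x : ℕ) (f : ℕ → α) : α :=
  Nat.rec (f 0) (fun n _ => f (Nat.succ n)) x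

theorem force_eq {α : Type} (x : ℕ) (f : ℕ → α) : force x f = f x := by
  cases x <;> rfl

/-- modular exponentiation, hexadecimal digits of the exponent, most significant first -/
def pwLoop (b n e k : ℕ) : ℕ → ℕ :=
  Nat.rec (fun acc => acc)
    (fun k ih acc => force (Nat.mod (Nat.mul (Nat.pow acc 16)
      (Nat.pow b (Nat.mod (Nat.div e (Nat.pow 16 k)) 16))) n) ih) k

theorem pwLoop_eq (b n e k : ℕ) : pwLoop b n e k (b ^ (e / 16 ^ k) % n) = b ^ e % n := by
  induction k with
  | zero => simp [pwLoop]
  | succ k ih =>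
    rw [← ih]
    show force (((b ^ (e / 16 ^ (k + 1)) % n) ^ 16 * b ^ (e / 16 ^ k % 16)) % n) (pwLoop b n e k) = _
    rw [force_eq, Nat.mul_mod, ← Nat.pow_mod, ← Nat.mul_mod, ← pow_mul, ← pow_add, pow_succ,
      ← Nat.div_div_eq_div_mul, mul_comm (_ / 16), Nat.div_add_mod]

def pw (b n f e : ℕ) : ℕ :=
  force e fun e => force (Nat.mod (Nat.pow b (Nat.div e (Nat.pow 16 f))) n) (pwLoop b n e f)

theorem pw_eq (b n f e : ℕ) : pw b n f e = b ^ e % n := by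
  unfold pw
  rw [force_eq, force_eq]
  exact pwLoop_eq b n e f

def gtest (n g : ℕ) : Bool := cond (Nat.ble 2 g) (Nat.ble (Nat.succ g) n) false

def comp (n : ℕ) : Bool :=
  cond (force (Nat.gcd n wM) (gtest n)) true
    (cond (Nat.ble 3 n) (not (Nat.beq (pw 2 n 358 (Nat.sub n 1)) 1)) false)

theorem comp_sound (n : ℕ) (h : comp n = true) : ¬ n.Prime := by
  intro hp
  unfold comp at h
  rw [force_eq] at h
  by_cases hg : gtest n (Nat.gcd n wM) = true
  · unfold gtest at hg
    have h1 : 2 ≤ Nat.gcd n wM ∧ Nat.gcd n wM + 1 ≤ n := by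
      simpa [Bool.cond_eq_ite] using hg
    rcases (Nat.dvd_prime hp).1 (Nat.gcd_dvd_left n wM) with h2 | h2 <;> omega
  · have hg' : gtest n (Nat.gcd n wM) = false := by simpa using hg
    rw [hg', pw_eq] at h
    have h1 : 3 ≤ n ∧ ¬ (2 ^ (n - 1) % n = 1) := by
      have h2 : 3 ≤ n ∧ (2 ^ (n - 1) % n).beq 1 = false := by
        simpa [Bool.cond_eq_ite] using h
      refine ⟨h2.1, fun h3 => ?_⟩
      rw [h3] at h2
      exact absurd h2.2 (by decide)
    apply h1.2
    have hc : Nat.Coprime 2 n := by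
      rw [Nat.coprime_primes Nat.prime_two hp]; omega
    have := Nat.ModEq.pow_totient hc
    rw [Nat.totient_prime hp] at this
    rw [this, Nat.mod_eq_of_lt (by omega)]

def dtest (i g d : ℕ) : Bool :=
  cond (Nat.beq d g) true
    (force (Nat.add (Nat.sub wp (Nat.mul g (Nat.pow 6 i))) (Nat.mul d (Nat.pow 6 i))) comp)

def itest (i : ℕ) : Bool :=
  force (Nat.mod (Nat.div wp (Nat.pow 6 i)) 6) fun g =>
    dtest i g 0 && dtest i g 1 && dtest i g 2 && dtest i g 3 && dtest i g 4 && dtest i g 5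

def allBelow (t : ℕ → Bool) (n : ℕ) : Bool :=
  Nat.rec true (fun k r => cond (t k) r false) n

theorem allBelow_sound (t : ℕ → Bool) (n : ℕ) (h : allBelow t n = true) :
    ∀ i < n, t i = true := by
  induction n with
  | zero => intro i hi; omega
  | succ n ih =>
    have h' : cond (t n) (allBelow t n) false = true := h
    cases ht : t n with
    | false => rw [ht] at h'; cases h'
    | true =>
      rw [ht] at h'
      intro i hi
      rcases Nat.lt_succ_iff_lt_or_eq.1 hi with h1 | h1
      · exact ih h' i h1
      · rw [h1, ht]

def ctest (r d : ℕ) : Bool := Nat.ble 2 (Nat.gcd (Nat.add wp (Nat.mul d (Nat.pow 6 r))) wQ)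

def citest (r : ℕ) : Bool := ctest r 1 && ctest r 2 && ctest r 3 && ctest r 4 && ctest r 5

set_option maxRecDepth 100000 in
theorem low_ok : allBelow itest 553 = true := by decide +kernel

set_option maxRecDepth 100000 in
theorem cov_ok : allBelow citest 1440 = true := by decide +kernel

set_option exponentiation.threshold 100000 in
theorem per_ok : 6 ^ 1440 % wQ = 1 := by decide +kernel

set_option exponentiation.threshold 100000 in
theorem wp_lt : wp < 6 ^ 553 := by decide +kernel

theorem wQ_lt : wQ < wp := by decide +kernel

set_option exponentiation.threshold 100000 in
theorem wp_form : wp = 1 + 2 ^ 716 * wh := by decide +kernel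

set_option exponentiation.threshold 100000 in
theorem wh_lt : wh < 2 ^ 716 := by decide +kernel

theorem proth_pw : pw 3 wp 358 (Nat.div (Nat.sub wp 1) 2) = Nat.sub wp 1 := by decide +kernel

theorem proth (p k h b : ℕ) (hform : p = 1 + 2 ^ (k + 1) * h) (hh : h < 2 ^ (k + 1)) (h0 : 0 < h)
    (hb : b ^ ((p - 1) / 2) % p = p - 1) : p.Prime := by
  have hpow : 0 < 2 ^ (k + 1) := by positivity
  have hp2 : 2 ≤ p := by rw [hform]; have := Nat.mul_pos hpow h0; omega
  by_contra hnp
  set q := p.minFac with hq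
  have hqp : q.Prime := Nat.minFac_prime (by omega)
  have hsq : q ^ 2 ≤ p := Nat.minFac_sq_le_self (by omega) hnp
  have hqd : q ∣ p := Nat.minFac_dvd p
  have : Fact q.Prime := ⟨hqp⟩
  have hpodd : p % 2 = 1 := by
    rw [hform, pow_succ]
    have : 2 ^ k * 2 * h = 2 * (2 ^ k * h) := by ring
    omega
  have hq2 : q ≠ 2 := by
    intro h2
    rw [h2] at hqd
    omega
  have hexp : (p - 1) / 2 = h * 2 ^ k := by
    have : p - 1 = (h * 2 ^ k) * 2 := by rw [hform, pow_succ, Nat.add_sub_cancel_left]; ring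
    rw [this, Nat.mul_div_cancel _ (by norm_num)]
  have hpz : ((p : ℕ) : ZMod q) = 0 := (ZMod.natCast_eq_zero_iff p q).2 hqd
  have hm1 : ((b : ZMod q) ^ h) ^ 2 ^ k = -1 := by
    have h1 : b ^ ((p - 1) / 2) = p * (b ^ ((p - 1) / 2) / p) + (p - 1) := by
      conv_lhs => rw [← Nat.div_add_mod (b ^ ((p - 1) / 2)) p, hb]
    have h2 := congrArg (fun x : ℕ => (x : ZMod q)) h1
    simp only [Nat.cast_add, Nat.cast_mul, hpz, zero_mul, zero_add,
      Nat.cast_sub (show 1 ≤ p by omega), Nat.cast_pow, Nat.cast_one, zero_sub] at h2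
    rw [← pow_mul, ← hexp, h2]
  have hne : (-1 : ZMod q) ≠ 1 := by
    have : Fact (2 < q) := ⟨lt_of_le_of_ne hqp.two_le (Ne.symm hq2)⟩
    exact ZMod.neg_one_ne_one
  have hord : orderOf ((b : ZMod q) ^ h) = 2 ^ (k + 1) := by
    apply orderOf_eq_prime_pow
    · rw [hm1]; exact hne
    · rw [pow_succ, pow_mul, hm1]; norm_num
  have hx : ((b : ZMod q) ^ h) ≠ 0 := by
    intro h0'
    rw [h0', zero_pow (by positivity)] at hm1
    have h3 : (1 : ZMod q) = 0 := by linear_combination hm1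
    exact one_ne_zero h3
  have hdvd : 2 ^ (k + 1) ∣ q - 1 := by
    rw [← hord]
    exact orderOf_dvd_of_pow_eq_one (ZMod.pow_card_sub_one_eq_one hx)
  have hle : 2 ^ (k + 1) ≤ q - 1 := Nat.le_of_dvd (by have := hqp.two_le; omega) hdvd
  have hq' : 2 ^ (k + 1) + 1 ≤ q := by have := hqp.two_le; omega
  generalize 2 ^ (k + 1) = F at *
  nlinarith

theorem wp_prime : wp.Prime := by
  have h1 := proth_pw
  rw [pw_eq] at h1
  have h2 : 0 < wh := by decide +kernel
  have key : ∀ p k m h : ℕ, m = k + 1 → p = 1 + 2 ^ m * h → h < 2 ^ m → 0 < h →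
      3 ^ (Nat.div (Nat.sub p 1) 2) % p = Nat.sub p 1 → p.Prime := by
    intro p k m h hm h3 h4 h5 h6
    subst hm
    exact proth p k h 3 h3 h4 h5 h6
  exact key wp 715 716 wh rfl wp_form wh_lt h2 h1

/-- There exists a widely digitally delicate prime in base 6: a prime p such
that replacing any one of its base-6 digits, including any of its leading
zeros, by a different digit in {0, ..., 5} yields a number that is not prime. -/
theorem exists_widely_digitally_delicate_base_6 :
    ∃ p : ℕ, Nat.Prime p ∧
      ∀ i : ℕ, ∀ d : ℕ, d ≤ 5 → d ≠ digit p i →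
        ¬ Nat.Prime (p - digit p i * 6 ^ i + d * 6 ^ i) := by 
  refine ⟨wp, wp_prime, ?_⟩
  intro i d hd hne
  by_cases hi : i < 553
  · have h1 := allBelow_sound _ _ low_ok i hi
    unfold itest at h1
    rw [force_eq] at h1
    have h2 : dtest i (digit wp i) d = true := by
      have h3 : (dtest i (digit wp i) 0 && dtest i (digit wp i) 1 && dtest i (digit wp i) 2 &&
        dtest i (digit wp i) 3 && dtest i (digit wp i) 4 && dtest i (digit wp i) 5) = true := h1
      simp only [Bool.and_eq_true] at h3
      obtain ⟨⟨⟨⟨⟨a0, a1⟩, a2⟩, a3⟩, a4⟩, a5⟩ := h3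
      interval_cases d <;> assumption
    unfold dtest at h2
    rw [force_eq, show Nat.beq d (digit wp i) = false from by
      cases hb : Nat.beq d (digit wp i) with
      | false => rfl
      | true => exact absurd (Nat.eq_of_beq_eq_true hb) hne] at h2
    exact comp_sound _ h2
  · have hi' : 553 ≤ i := by omega
    have hlt : wp < 6 ^ i :=
      lt_of_lt_of_le wp_lt (Nat.pow_le_pow_right (by norm_num) hi')
    have hz : digit wp i = 0 := by
      unfold digit
      rw [Nat.div_eq_of_lt hlt]
    rw [hz] at hne ⊢
    rw [Nat.zero_mul, Nat.sub_zero]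
    have h1 := allBelow_sound _ _ cov_ok (i % 1440) (Nat.mod_lt _ (by norm_num))
    have h2 : ctest (i % 1440) d = true := by
      unfold citest at h1
      simp only [Bool.and_eq_true] at h1
      obtain ⟨⟨⟨⟨a1, a2⟩, a3⟩, a4⟩, a5⟩ := h1
      interval_cases d
      · exact absurd rfl hne
      all_goals assumption
    have h3 : 2 ≤ Nat.gcd (wp + d * 6 ^ (i % 1440)) wQ := Nat.le_of_ble_eq_true h2
    have hper : 6 ^ 1440 ≡ 1 [MOD wQ] := by
      have h5 : 1 % wQ = 1 := by decide +kernel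
      exact per_ok.trans h5.symm
    have h4 : 6 ^ i ≡ 6 ^ (i % 1440) [MOD wQ] := by
      have h6 := (hper.pow (i / 1440)).mul_right (6 ^ (i % 1440))
      rw [one_pow, one_mul, ← pow_mul, ← pow_add, Nat.div_add_mod] at h6
      exact h6
    have h7 : wp + d * 6 ^ i ≡ wp + d * 6 ^ (i % 1440) [MOD wQ] :=
      (h4.mul_left d).add_left wp
    have h8 := h7.gcd_eq
    rw [← h8] at h3
    intro hp
    rcases (Nat.dvd_prime hp).1 (Nat.gcd_dvd_left (wp + d * 6 ^ i) wQ) with h9 | h9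
    · omega
    · have hQpos : 0 < wQ := by decide +kernel
      have h10 := Nat.le_of_dvd hQpos (Nat.gcd_dvd_right (wp + d * 6 ^ i) wQ)
      rw [h9] at h10
      have := wQ_lt
      have h11 := Nat.le_add_right wp (d * 6 ^ i)
      exact absurd (lt_of_lt_of_le this h11) (not_lt.2 h10)
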